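/- arXiv:1909.06863 — 4 statements merged into one kernel-verified Lean document; each statement's English description precedes it below -/
import Mathlib

section
/- Let V : ℤ → ℝ be positive and inf-finite. If (h_n) is a sequence in B_V that is uniformly bounded below and whose pointwise supremum sup_n h_n belongs to B_V, then (h_n) has a subsequence that converges in the metric space (B_V, w). -/
open Filter Topology

/-- `V` is inf-finite: each sublevel set is finite. -/
def InfFinite (V : ℤ → ℝ) : Prop := ∀ K : ℝ, {x : ℤ | V x ≤ K}.Finite

/-- `h ∈ B_V`: `h` is bounded below and `|h(x)|/V(x) → 0` as `|x| → ∞`. -/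
def MemBV (V : ℤ → ℝ) (h : ℤ → ℝ) : Prop :=
  BddBelow (Set.range h) ∧
    Tendsto (fun x : ℤ => |h x| / V x) Filter.cofinite (nhds 0)

/-!
After division by `V`, the sequence lies in the order interval between `c / V` and
`(⨆ n, h n) / V`, two functions that vanish at infinity. This interval is compact in the product
topology, so a subsequence converges pointwise. Outside a finite set the interval is uniformly
thin, and on that finite set pointwise convergence is uniform, so the convergence is uniform.
-/

section

variable {α : Type*}

theorem tendsto_cofinite_atTop_of_finite_setOf_le {β : Type*} [LinearOrder β] {V : α → β}
    (hV : ∀ K, {x | V x ≤ K}.Finite) : Tendsto V cofinite atTop :=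
  tendsto_atTop.2 fun K => (hV K).eventually_cofinite_notMem.mono fun _ hx => (not_le.1 hx).le

theorem countable_of_tendsto_cofinite_atTop {β : Type*} [Preorder β] [NoMaxOrder β]
    [(atTop : Filter β).IsCountablyGenerated] {V : α → β} (hV : Tendsto V cofinite atTop) :
    Countable α := by
  have hker : (atTop : Filter β).ker = ∅ :=
    Set.eq_empty_of_forall_notMem fun x hx =>
      lt_irrefl x (mem_ker.1 hx (Set.Ioi x) (Ioi_mem_atTop x))
  simpa only [hker, Set.preimage_empty, Set.compl_empty, Set.countable_univ_iff]
    using hV.countable_compl_preimage_ker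

theorem tendstoUniformly_of_dist_le_of_tendsto_cofinite {ι E : Type*} [PseudoMetricSpace E]
    {l : Filter ι} {F : ι → α → E} {f : α → E} {b : α → ℝ} (hb : Tendsto b cofinite (𝓝 0))
    (hdist : ∀ i x, dist (F i x) (f x) ≤ b x)
    (hlim : ∀ x, Tendsto (fun i => F i x) l (𝓝 (f x))) :
    TendstoUniformly F f l := by
  rw [Metric.tendstoUniformly_iff]
  intro ε hε
  have hfin : {x | ¬ b x < ε}.Finite := eventually_cofinite.1 (hb.eventually_lt_const hε)
  have hsmall : ∀ᶠ i in l, ∀ x ∈ {x | ¬ b x < ε}, dist (F i x) (f x) < ε :=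
    hfin.eventually_all.2 fun x _ => Metric.tendsto_nhds.1 (hlim x) ε hε
  filter_upwards [hsmall] with i hi x
  rw [dist_comm]
  by_cases hx : b x < ε
  · exact (hdist i x).trans_lt hx
  · exact hi x hx

theorem exists_subseq_tendstoUniformly_of_mem_Icc [Countable α] {u : ℕ → α → ℝ} {a b : α → ℝ}
    (hab : Tendsto (fun x => b x - a x) cofinite (𝓝 0)) (hu : ∀ n, u n ∈ Set.Icc a b) :
    ∃ f ∈ Set.Icc a b, ∃ φ : ℕ → ℕ, StrictMono φ ∧ TendstoUniformly (u ∘ φ) f atTop := by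
  obtain ⟨f, hf, φ, hφ, hlim⟩ := isCompact_Icc.tendsto_subseq hu
  refine ⟨f, hf, φ, hφ, tendstoUniformly_of_dist_le_of_tendsto_cofinite hab (fun k x => ?_)
    (tendsto_pi_nhds.1 hlim)⟩
  exact Real.dist_le_of_mem_Icc ⟨(hu (φ k)).1 x, (hu (φ k)).2 x⟩ ⟨hf.1 x, hf.2 x⟩

theorem exists_subseq_tendstoUniformly_div_of_le_of_le [Countable α] {V : α → ℝ}
    (hVpos : ∀ x, 0 < V x) {h : ℕ → α → ℝ} {a b : α → ℝ}
    (ha : Tendsto (fun x => a x / V x) cofinite (𝓝 0))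
    (hb : Tendsto (fun x => b x / V x) cofinite (𝓝 0))
    (hah : ∀ n x, a x ≤ h n x) (hhb : ∀ n x, h n x ≤ b x) :
    ∃ φ : ℕ → ℕ, StrictMono φ ∧ ∃ g : α → ℝ, (∀ x, a x ≤ g x) ∧
      Tendsto (fun x => g x / V x) cofinite (𝓝 0) ∧
      TendstoUniformly (fun k x => h (φ k) x / V x) (fun x => g x / V x) atTop := by
  have hab : Tendsto (fun x => b x / V x - a x / V x) cofinite (𝓝 0) := by
    simpa only [sub_zero] using hb.sub ha
  obtain ⟨f, ⟨haf, hfb⟩, φ, hφ, hunif⟩ :=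
    exists_subseq_tendstoUniformly_of_mem_Icc (u := fun n x => h n x / V x) hab fun n =>
      ⟨fun x => div_le_div_of_nonneg_right (hah n x) (hVpos x).le,
        fun x => div_le_div_of_nonneg_right (hhb n x) (hVpos x).le⟩
  have hf : (fun x => f x * V x / V x) = f :=
    funext fun x => mul_div_cancel_right₀ (f x) (hVpos x).ne'
  refine ⟨φ, hφ, fun x => f x * V x, fun x => (div_le_iff₀ (hVpos x)).1 (haf x), ?_, ?_⟩
  · rw [hf]
    exact tendsto_of_tendsto_of_tendsto_of_le_of_le ha hb haf hfb
  · rwa [hf]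

theorem tendsto_abs_div_zero_iff {V : α → ℝ} (hVpos : ∀ x, 0 < V x) {f : α → ℝ}
    {l : Filter α} :
    Tendsto (fun x => |f x| / V x) l (𝓝 0) ↔ Tendsto (fun x => f x / V x) l (𝓝 0) := by
  rw [tendsto_zero_iff_abs_tendsto_zero (fun x => f x / V x)]
  simp only [Function.comp_def, abs_div, abs_of_pos (hVpos _)]

theorem statement1_general (V : α → ℝ) (hVpos : ∀ x, 0 < V x)
    (hVfin : ∀ K : ℝ, {x | V x ≤ K}.Finite) (h : ℕ → α → ℝ)
    (hlb : ∃ c : ℝ, ∀ n x, c ≤ h n x)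
    (hba : ∀ x, BddAbove (Set.range fun n => h n x))
    (hsup : Tendsto (fun x => |⨆ n, h n x| / V x) cofinite (𝓝 0)) :
    ∃ φ : ℕ → ℕ, StrictMono φ ∧ ∃ g : α → ℝ,
      (BddBelow (Set.range g) ∧ Tendsto (fun x => |g x| / V x) cofinite (𝓝 0)) ∧
      ∀ δ > (0 : ℝ), ∃ N : ℕ, ∀ k ≥ N, ∀ x, |h (φ k) x - g x| / V x ≤ δ := by
  obtain ⟨c, hc⟩ := hlb
  have hVtop : Tendsto V cofinite atTop := tendsto_cofinite_atTop_of_finite_setOf_le hVfin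
  have : Countable α := countable_of_tendsto_cofinite_atTop hVtop
  obtain ⟨φ, hφ, g, hcg, hg, hunif⟩ := exists_subseq_tendstoUniformly_div_of_le_of_le hVpos
    (hVtop.const_div_atTop c) ((tendsto_abs_div_zero_iff hVpos).1 hsup) hc
    fun n x => le_ciSup (hba x) n
  refine ⟨φ, hφ, g, ⟨⟨c, Set.forall_mem_range.2 hcg⟩, (tendsto_abs_div_zero_iff hVpos).2 hg⟩,
    fun δ hδ => ?_⟩
  obtain ⟨N, hN⟩ := eventually_atTop.1 (Metric.tendstoUniformly_iff.1 hunif δ hδ)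
  refine ⟨N, fun k hk x => ?_⟩
  calc |h (φ k) x - g x| / V x = dist (g x / V x) (h (φ k) x / V x) := by
        rw [dist_comm, Real.dist_eq, ← sub_div, abs_div, abs_of_pos (hVpos x)]
    _ ≤ δ := (hN k hk x).le

end

/-- If `(h_n) ⊆ B_V` is uniformly bounded below and its pointwise supremum
belongs to `B_V`, then `(h_n)` has a subsequence converging in the metric
`w(h,h') = sup_x |h(x) - h'(x)|/V(x)` to an element of `B_V`. -/
theorem statement1 (V : ℤ → ℝ) (hVpos : ∀ x, 0 < V x) (hVfin : InfFinite V)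
    (h : ℕ → ℤ → ℝ) (hmem : ∀ n, MemBV V (h n))
    (hlb : ∃ c : ℝ, ∀ n x, c ≤ h n x)
    (hba : ∀ x, BddAbove (Set.range fun n => h n x))
    (hsup : MemBV V fun x => ⨆ n, h n x) :
    ∃ φ : ℕ → ℕ, StrictMono φ ∧ ∃ g : ℤ → ℝ, MemBV V g ∧
      ∀ δ > (0 : ℝ), ∃ N : ℕ, ∀ k ≥ N, ∀ x : ℤ, |h (φ k) x - g x| / V x ≤ δ :=
  statement1_general V hVpos hVfin h hlb hba hsup.2
end

section
/- Let V : ℤ → ℝ be positive and inf-finite. If (h_n) is a sequence in B_V that is uniformly bounded below, whose pointwise supremum sup_n h_n belongs to B_V, and which converges pointwise to a function h, then h ∈ B_V and w(h_n,h) → 0, i.e. pointwise convergence of such a sequence implies convergence in the metric w. -/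
open Filter Topology

/-!
The functions `h_n` and their limit lie between a constant `c` and `S = sup_n h_n`, so after
division by `V` they are all dominated by the single function `(|c| + |S|) / V`, which vanishes at
infinity because `V → ∞` and `S ∈ B_V`. Off a finite set this bound is uniformly small; on the
finite set, pointwise convergence is uniform.
-/

section

variable {α ι : Type*} {l : Filter ι}

theorem tendstoUniformly_of_tendsto_of_norm_le_of_tendsto_cofinite {E : Type*}
    [SeminormedAddCommGroup E] {F : ι → α → E} {f : α → E} {b : α → ℝ}
    (hb : Tendsto b cofinite (𝓝 0)) (hFb : ∀ i x, ‖F i x‖ ≤ b x)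
    (hF : ∀ x, Tendsto (F · x) l (𝓝 (f x))) : TendstoUniformly F f l := by
  rcases l.eq_or_neBot with rfl | _
  · exact fun _ _ => eventually_bot
  have hfb (x : α) : ‖f x‖ ≤ b x := le_of_tendsto' (hF x).norm (hFb · x)
  refine Metric.tendstoUniformly_iff.mpr fun ε hε => ?_
  have finite_large : {x | ¬ b x < ε / 2}.Finite :=
    eventually_cofinite.mp (hb.eventually_lt_const (half_pos hε))
  have close_on_large : ∀ᶠ i in l, ∀ x ∈ {x | ¬ b x < ε / 2}, dist (f x) (F i x) < ε := by
    refine (eventually_all_finite finite_large).mpr fun x _ => ?_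
    simpa only [dist_comm] using Metric.tendsto_nhds.mp (hF x) ε hε
  filter_upwards [close_on_large] with i hi x
  by_cases hx : b x < ε / 2
  · calc dist (f x) (F i x) ≤ ‖f x‖ + ‖F i x‖ := dist_le_norm_add_norm _ _
      _ < ε := by linarith [hfb x, hFb i x]
  · exact hi x hx

theorem abs_div_le_add_of_le_of_le {𝕜 : Type*} [Field 𝕜] [LinearOrder 𝕜]
    [IsStrictOrderedRing 𝕜] {a b c v : 𝕜} (hv : 0 ≤ v) (hab : a ≤ b) (hbc : b ≤ c) :
    |b| / v ≤ |a| / v + |c| / v := by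
  rw [← add_div]
  gcongr
  exact (abs_le_max_abs_abs hab hbc).trans
    (max_le_add_of_nonneg (abs_nonneg a) (abs_nonneg c))

theorem statement2_general [l.NeBot] {V : α → ℝ} (hVpos : ∀ x, 0 < V x)
    (hVtop : Tendsto V cofinite atTop) {h : ι → α → ℝ} {c : ℝ} (hc : ∀ i x, c ≤ h i x)
    {S : α → ℝ} (hS : ∀ i x, h i x ≤ S x)
    (hSV : Tendsto (fun x => |S x| / V x) cofinite (𝓝 0))
    {g : α → ℝ} (hp : ∀ x, Tendsto (h · x) l (𝓝 (g x))) :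
    (BddBelow (Set.range g) ∧ Tendsto (fun x => |g x| / V x) cofinite (𝓝 0)) ∧
      ∀ δ > 0, ∀ᶠ i in l, ∀ x, |h i x - g x| / V x ≤ δ := by
  have hcg (x : α) : c ≤ g x := ge_of_tendsto' (hp x) (hc · x)
  have hgS (x : α) : g x ≤ S x := le_of_tendsto' (hp x) (hS · x)
  have envelope : Tendsto (fun x => |c| / V x + |S x| / V x) cofinite (𝓝 0) := by
    simpa only [add_zero] using (hVtop.const_div_atTop |c|).add hSV
  have uniform : TendstoUniformly (fun i x => h i x / V x) (fun x => g x / V x) l := by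
    refine tendstoUniformly_of_tendsto_of_norm_le_of_tendsto_cofinite envelope (fun i x => ?_)
      fun x => (hp x).div_const (V x)
    rw [Real.norm_eq_abs, abs_div, abs_of_pos (hVpos x)]
    exact abs_div_le_add_of_le_of_le (hVpos x).le (hc i x) (hS i x)
  refine ⟨⟨⟨c, Set.forall_mem_range.mpr hcg⟩, ?_⟩, fun δ hδ => ?_⟩
  · exact squeeze_zero (fun x => div_nonneg (abs_nonneg _) (hVpos x).le)
      (fun x => abs_div_le_add_of_le_of_le (hVpos x).le (hcg x) (hgS x)) envelope
  · filter_upwards [Metric.tendstoUniformly_iff.mp uniform δ hδ] with i hi x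
    calc |h i x - g x| / V x = dist (g x / V x) (h i x / V x) := by
          rw [dist_comm, Real.dist_eq, ← sub_div, abs_div, abs_of_pos (hVpos x)]
      _ ≤ δ := (hi x).le

end

/-- If `(h_n) ⊆ B_V` is uniformly bounded below, its pointwise supremum
belongs to `B_V`, and `h_n → g` pointwise, then `g ∈ B_V` and `w(h_n, g) → 0`, where
`w(h,h') = sup_x |h(x) - h'(x)|/V(x)`. -/
theorem statement2 (V : ℤ → ℝ) (hVpos : ∀ x, 0 < V x) (hVfin : InfFinite V)
    (h : ℕ → ℤ → ℝ) (hmem : ∀ n, MemBV V (h n))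
    (hlb : ∃ c : ℝ, ∀ n x, c ≤ h n x)
    (hba : ∀ x, BddAbove (Set.range fun n => h n x))
    (hsup : MemBV V fun x => ⨆ n, h n x)
    (g : ℤ → ℝ) (hp : ∀ x, Tendsto (fun n => h n x) atTop (nhds (g x))) :
    MemBV V g ∧
      ∀ δ > (0 : ℝ), ∃ N : ℕ, ∀ n ≥ N, ∀ x : ℤ, |h n x - g x| / V x ≤ δ := by
  obtain ⟨c, hc⟩ := hlb
  have hVtop : Tendsto V cofinite atTop := (northcott_iff_tendsto V).mp ⟨hVfin⟩
  obtain ⟨hg, hw⟩ :=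
    statement2_general hVpos hVtop hc (fun n x => le_ciSup (hba x) n) hsup.2 hp
  exact ⟨hg, fun δ hδ => eventually_atTop.mp (hw δ hδ)⟩
end

section
/- Under Assumption (A): for any family {h^ε}_{0<ε≤ε₀} ∈ 𝓑_V, each t ∈ {1,…,T} and each u ∈ U, the family {Λ^ε_t(·,u;h^ε)}_{0<ε≤ε₀} belongs to 𝓑_V; that is, each Λ^ε_t(·,u;h^ε) is finite and belongs to B_V, the family is uniformly bounded below, and its pointwise supremum sup_{0<ε≤ε₀} Λ^ε_t(·,u;h^ε) belongs to B_V. -/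
open Filter Topology

/-- The setup for a countable-stated (here `ℤ`-stated) risk-sensitive MDP with horizon `T`,
transition kernels `q ε t · x u` (for `0 < ε ≤ eps0`), rate functions `I`, running costs
`f τ t x u` and terminal costs `g τ x`.  The Lyapunov function `V` is positive and inf-finite. -/
structure RSSetup (U : Type*) [MetricSpace U] where
  T : ℕ
  eps0 : ℝ
  eps0_pos : 0 < eps0
  V : ℤ → ℝ
  V_pos : ∀ x, 0 < V x
  V_infFinite : ∀ K : ℝ, {x : ℤ | V x ≤ K}.Finite
  q : ℝ → ℕ → ℤ → U → ℤ → ℝ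
  q_nonneg : ∀ ε ∈ Set.Ioc (0 : ℝ) eps0, ∀ t ∈ Finset.Icc 1 T, ∀ (x : ℤ) (u : U) (z : ℤ),
    0 ≤ q ε t x u z
  q_pmf : ∀ ε ∈ Set.Ioc (0 : ℝ) eps0, ∀ t ∈ Finset.Icc 1 T, ∀ (x : ℤ) (u : U),
    HasSum (q ε t x u) 1
  I : ℕ → ℤ → U → ℤ → ENNReal
  I_subfin : ∀ (t : ℕ) (x : ℤ) (u : U) (K : ENNReal), K ≠ ⊤ → {z : ℤ | I t x u z ≤ K}.Finite
  f : ℕ → ℕ → ℤ → U → ℝ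
  g : ℕ → ℤ → ℝ

namespace RSSetup

variable {U : Type*} [MetricSpace U]

/-- `Λ^ε_t(x,u;h) = ε log ∑_z exp(h(z)/ε) q^ε_t(z;x,u)`. -/
noncomputable def lamE (S : RSSetup U) (ε : ℝ) (t : ℕ) (x : ℤ) (u : U) (h : ℤ → ℝ) : ℝ :=
  ε * Real.log (∑' z : ℤ, Real.exp (h z / ε) * S.q ε t x u z)

/-- `Λ_t(x,u;h) = sup_z [h(z) - I_t(z;x,u)]` (the supremum being over the points where the
rate function is finite). -/
noncomputable def lam (S : RSSetup U) (t : ℕ) (x : ℤ) (u : U) (h : ℤ → ℝ) : ℝ :=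
  sSup ((fun z => h z - (S.I t x u z).toReal) '' {z : ℤ | S.I t x u z ≠ ⊤})

/-- Membership in `B_V`: bounded below and `|h(x)|/V(x) → 0` as `|x| → ∞`. -/
def memBV (S : RSSetup U) (h : ℤ → ℝ) : Prop :=
  BddBelow (Set.range h) ∧
    Tendsto (fun x : ℤ => |h x| / S.V x) Filter.cofinite (nhds 0)

/-- The pointwise supremum `x ↦ sup_{0<ε≤ε₀} h^ε(x)` of a family. -/
noncomputable def supFam (S : RSSetup U) (h : ℝ → ℤ → ℝ) : ℤ → ℝ :=
  fun x => sSup ((fun ε => h ε x) '' Set.Ioc (0 : ℝ) S.eps0)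

/-- Membership of a family `{h^ε}_{0<ε≤ε₀}` in `𝓑_V`: each member is in `B_V`, the family is
uniformly bounded below, and the pointwise supremum `sup_ε h^ε` belongs to `B_V`. -/
def memFam (S : RSSetup U) (h : ℝ → ℤ → ℝ) : Prop :=
  (∀ ε ∈ Set.Ioc (0 : ℝ) S.eps0, S.memBV (h ε)) ∧
  (∃ c : ℝ, ∀ ε ∈ Set.Ioc (0 : ℝ) S.eps0, ∀ x, c ≤ h ε x) ∧
  (∀ x, BddAbove ((fun ε => h ε x) '' Set.Ioc (0 : ℝ) S.eps0)) ∧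
  S.memBV (S.supFam h)

/-- Assumption (A) with parameter `λ₀`. -/
def AssumptionA (S : RSSetup U) (lam0 : ℝ) : Prop :=
  0 < lam0 ∧
  -- (A1): `sup_{0<ε≤ε₀} Λ^ε_t(x,u;λ₀ V) < ∞` (in particular the defining sums converge)
  (∀ t ∈ Finset.Icc 1 S.T, ∀ (x : ℤ) (u : U),
    (∀ ε ∈ Set.Ioc (0 : ℝ) S.eps0,
      Summable fun z : ℤ => Real.exp (lam0 * S.V z / ε) * S.q ε t x u z) ∧
    ∃ C : ℝ, ∀ ε ∈ Set.Ioc (0 : ℝ) S.eps0, S.lamE ε t x u (fun z => lam0 * S.V z) ≤ C) ∧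
  -- (A2): continuity in `u`, and `Λ^ε_t(x,u^ε;h) → Λ_t(x,u;h)` whenever `u^ε → u`
  (∀ t ∈ Finset.Icc 1 S.T, ∀ x : ℤ, ∀ h : ℤ → ℝ, S.memBV h →
    (∀ ε ∈ Set.Ioc (0 : ℝ) S.eps0, Continuous fun u : U => S.lamE ε t x u h) ∧
    (∀ (u : U) (uu : ℝ → U), Tendsto uu (nhdsWithin 0 (Set.Ioi 0)) (nhds u) →
      Tendsto (fun ε => S.lamE ε t x (uu ε) h) (nhdsWithin 0 (Set.Ioi 0))
        (nhds (S.lam t x u h)))) ∧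
  -- (A3): `limsup_{|x|→∞} sup_{0<ε≤ε₀} Λ^ε_t(x,u;λV)/(λV(x)) < K_u` for `λ ∈ (0,λ₀)`
  (∀ t ∈ Finset.Icc 1 S.T, ∀ u : U, ∃ Ku : ℝ, ∀ lam' ∈ Set.Ioo (0 : ℝ) lam0,
    ∃ c < Ku, ∀ᶠ x in (Filter.cofinite : Filter ℤ), ∀ ε ∈ Set.Ioc (0 : ℝ) S.eps0,
      S.lamE ε t x u (fun z => lam' * S.V z) ≤ c * (lam' * S.V x))

/-- Assumption (B). -/
def AssumptionB (S : RSSetup U) : Prop :=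
  (∀ τ ∈ Finset.Icc 1 S.T, ∀ t ∈ Finset.Icc 1 S.T, ∀ u : U,
    S.memBV fun x => S.f τ t x u) ∧
  (∀ τ ∈ Finset.Icc 1 S.T, S.memBV (S.g τ)) ∧
  (∀ t ∈ Finset.Icc 1 S.T, ∀ x : ℤ, Continuous fun u : U => S.f t t x u) ∧
  (∀ t ∈ Finset.Icc 1 S.T, ∀ x : ℤ, ∀ K : ℝ, IsCompact {u : U | S.f t t x u ≤ K})

/-- Assumption (C) with parameter `λ₀`: growth conditions over the sublevel sets
`B_{t,λ}(x) = {u : f_{t,t}(x,u) ≤ λ V(x)}`. -/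
def AssumptionC (S : RSSetup U) (lam0 : ℝ) : Prop :=
  0 < lam0 ∧ ∃ K1 : ℝ,
    ∀ lam' ∈ Set.Ioo (0 : ℝ) lam0, ∀ τ ∈ Finset.Icc 1 S.T, ∀ t ∈ Finset.Icc 1 S.T,
      (∀ c > K1, ∀ᶠ x in (Filter.cofinite : Filter ℤ), ∀ u : U,
        S.f t t x u ≤ lam' * S.V x → S.f τ t x u ≤ c * (lam' * S.V x)) ∧
      (∀ c > K1, ∀ᶠ x in (Filter.cofinite : Filter ℤ), ∀ ε ∈ Set.Ioo (0 : ℝ) S.eps0, ∀ u : U,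
        S.f t t x u ≤ lam' * S.V x →
          S.lamE ε t x u (fun z => lam' * S.V z) ≤ c * (lam' * S.V x))

/-- The cost `J^ε_{τ,t}(x;π)` of a Markov policy `π`, defined backward from
`J^ε_{τ,T+1} = g_τ`. -/
noncomputable def Jeps (S : RSSetup U) (ε : ℝ) (π : ℕ → ℤ → U) (τ t : ℕ) : ℤ → ℝ :=
  if h : S.T + 1 ≤ t then S.g τ
  else fun x => S.f τ t x (π t x) + S.lamE ε t x (π t x) (S.Jeps ε π τ (t + 1))
termination_by S.T + 1 - t
decreasing_by omega

/-- The limit cost `J_{τ,t}(x;π)` of a Markov policy `π`, defined backward from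
`J_{τ,T+1} = g_τ`. -/
noncomputable def Jlim (S : RSSetup U) (π : ℕ → ℤ → U) (τ t : ℕ) : ℤ → ℝ :=
  if h : S.T + 1 ≤ t then S.g τ
  else fun x => S.f τ t x (π t x) + S.lam t x (π t x) (S.Jlim π τ (t + 1))
termination_by S.T + 1 - t
decreasing_by omega

/-- `(η, Θ)` solves the `ε`-recursion system. -/
def SolvesEpsSystem (S : RSSetup U) (ε : ℝ) (η : ℕ → ℤ → U) (Θ : ℕ → ℕ → ℤ → ℝ) : Prop :=
  (∀ τ ∈ Finset.Icc 1 S.T, Θ τ (S.T + 1) = S.g τ) ∧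
  (∀ t ∈ Finset.Icc 1 S.T, ∀ (x : ℤ) (u : U),
    S.f t t x (η t x) + S.lamE ε t x (η t x) (Θ t (t + 1)) ≤
      S.f t t x u + S.lamE ε t x u (Θ t (t + 1))) ∧
  (∀ τ ∈ Finset.Icc 1 S.T, ∀ t ∈ Finset.Icc 1 S.T, ∀ x : ℤ,
    Θ τ t x = S.f τ t x (η t x) + S.lamE ε t x (η t x) (Θ τ (t + 1)))

/-- `(η, Θ)` solves the limit recursion system. -/
def SolvesLimSystem (S : RSSetup U) (η : ℕ → ℤ → U) (Θ : ℕ → ℕ → ℤ → ℝ) : Prop :=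
  (∀ τ ∈ Finset.Icc 1 S.T, Θ τ (S.T + 1) = S.g τ) ∧
  (∀ t ∈ Finset.Icc 1 S.T, ∀ (x : ℤ) (u : U),
    S.f t t x (η t x) + S.lam t x (η t x) (Θ t (t + 1)) ≤
      S.f t t x u + S.lam t x u (Θ t (t + 1))) ∧
  (∀ τ ∈ Finset.Icc 1 S.T, ∀ t ∈ Finset.Icc 1 S.T, ∀ x : ℤ,
    Θ τ t x = S.f τ t x (η t x) + S.lam t x (η t x) (Θ τ (t + 1)))

/-- `π` is a time-inconsistent `ε`-risk-sensitive equilibrium. -/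
def IsEpsEquilibrium (S : RSSetup U) (ε : ℝ) (π : ℕ → ℤ → U) : Prop :=
  ∀ t ∈ Finset.Icc 1 S.T, ∀ (x : ℤ) (u : U),
    S.Jeps ε π t t x ≤ S.f t t x u + S.lamE ε t x u (S.Jeps ε π t (t + 1))

/-- `π` is a time-inconsistent risk-sensitive equilibrium for the limit cost. -/
def IsLimEquilibrium (S : RSSetup U) (π : ℕ → ℤ → U) : Prop :=
  ∀ t ∈ Finset.Icc 1 S.T, ∀ (x : ℤ) (u : U),
    S.Jlim π t t x ≤ S.f t t x u + S.lam t x u (S.Jlim π t (t + 1))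

end RSSetup

/-!
The operator `Λ^ε_t(x,u;·)` is monotone, fixes constants and commutes with adding constants. Hence
a uniform lower bound of `h^ε` is inherited by `Λ^ε_t(·,u;h^ε)`. Since `sup_ε h^ε = o(V)`, for every
`δ > 0` there is a `C` with `h^ε ≤ C + δ V` for all `ε`, and therefore
`Λ^ε_t(·,u;h^ε) ≤ C + Λ^ε_t(·,u;δ V)`. With `δ = λ₀` this is finite by (A1); with `0 < δ < λ₀` it is
eventually at most `C + K_u δ V` by (A3), and `δ → 0` gives the `o(V)` bound, uniformly in `ε`.
-/

open Asymptotics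

section EntropicRisk

variable {α : Type*} {ε c : ℝ} {p h k : α → ℝ}

/-- The exponential moment of `h / ε` under the weights `p` is finite; this is what makes
`entropicRisk ε p h` meaningful. -/
def ExpSummable (ε : ℝ) (p h : α → ℝ) : Prop :=
  Summable fun z => Real.exp (h z / ε) * p z

/-- The entropic risk `ε log 𝔼[exp (h / ε)]` of `h` under the weights `p` at temperature `ε`, the
operator of which every `Λ^ε_t(x,u;·)` is an instance. It is a junk value unless
`ExpSummable ε p h`. -/
noncomputable def entropicRisk (ε : ℝ) (p h : α → ℝ) : ℝ :=
  ε * Real.log (∑' z, Real.exp (h z / ε) * p z)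

lemma exp_div_mul_le_exp_div_mul (hε : 0 ≤ ε) (hp : 0 ≤ p) (hhk : h ≤ k) (z : α) :
    Real.exp (h z / ε) * p z ≤ Real.exp (k z / ε) * p z := by
  have hpz : 0 ≤ p z := hp z
  have hhkz : h z ≤ k z := hhk z
  gcongr

lemma exp_const_add_div_mul (c : ℝ) (z : α) :
    Real.exp ((c + h z) / ε) * p z = Real.exp (c / ε) * (Real.exp (h z / ε) * p z) := by
  rw [add_div, Real.exp_add, mul_assoc]

lemma ExpSummable.mono (hk : ExpSummable ε p k) (hε : 0 ≤ ε) (hp : 0 ≤ p) (hhk : h ≤ k) :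
    ExpSummable ε p h :=
  Summable.of_nonneg_of_le (fun z => mul_nonneg (Real.exp_nonneg _) (hp z))
    (exp_div_mul_le_exp_div_mul hε hp hhk) hk

lemma ExpSummable.const_add (hh : ExpSummable ε p h) (c : ℝ) :
    ExpSummable ε p fun z => c + h z := by
  simpa only [ExpSummable, exp_const_add_div_mul] using Summable.mul_left (Real.exp (c / ε)) hh

lemma ExpSummable.tsum_pos (hh : ExpSummable ε p h) (hp : 0 < p) :
    0 < ∑' z, Real.exp (h z / ε) * p z := by
  obtain ⟨hp0, z, hz⟩ := Pi.lt_def.1 hp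
  exact Summable.tsum_pos hh (fun y => mul_nonneg (Real.exp_nonneg _) (hp0 y)) z
    (mul_pos (Real.exp_pos _) hz)

lemma entropicRisk_mono (hε : 0 ≤ ε) (hp : 0 < p) (hk : ExpSummable ε p k) (hhk : h ≤ k) :
    entropicRisk ε p h ≤ entropicRisk ε p k := by
  have hh : ExpSummable ε p h := hk.mono hε hp.le hhk
  have hsum : ∑' z, Real.exp (h z / ε) * p z ≤ ∑' z, Real.exp (k z / ε) * p z :=
    Summable.tsum_le_tsum (exp_div_mul_le_exp_div_mul hε hp.le hhk) hh hk
  exact mul_le_mul_of_nonneg_left (Real.log_le_log (hh.tsum_pos hp) hsum) hε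

lemma entropicRisk_const_add (hε : ε ≠ 0) (hp : 0 < p) (hh : ExpSummable ε p h) (c : ℝ) :
    entropicRisk ε p (fun z => c + h z) = c + entropicRisk ε p h := by
  simp only [entropicRisk, exp_const_add_div_mul, tsum_mul_left]
  rw [Real.log_mul (Real.exp_ne_zero _) (hh.tsum_pos hp).ne', Real.log_exp, mul_add,
    mul_div_cancel₀ c hε]

lemma entropicRisk_const (hε : ε ≠ 0) (hp : HasSum p 1) (c : ℝ) :
    entropicRisk ε p (fun _ => c) = c := by
  simp only [entropicRisk, tsum_mul_left, hp.tsum_eq, mul_one, Real.log_exp]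
  exact mul_div_cancel₀ c hε

lemma pos_of_hasSum_one (hp : 0 ≤ p) (hp1 : HasSum p 1) : 0 < p := by
  refine hp.lt_of_ne ?_
  rintro rfl
  exact zero_ne_one (hasSum_zero.unique hp1)

lemma le_entropicRisk (hε : 0 < ε) (hp : 0 ≤ p) (hp1 : HasSum p 1) (hh : ExpSummable ε p h)
    (hc : ∀ z, c ≤ h z) : c ≤ entropicRisk ε p h :=
  calc c = entropicRisk ε p fun _ => c := (entropicRisk_const hε.ne' hp1 c).symm
    _ ≤ entropicRisk ε p h := entropicRisk_mono hε.le (pos_of_hasSum_one hp hp1) hh hc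

lemma entropicRisk_le_const_add (hε : 0 < ε) (hp : 0 < p) (hk : ExpSummable ε p k)
    (hhk : ∀ z, h z ≤ c + k z) : entropicRisk ε p h ≤ c + entropicRisk ε p k :=
  calc entropicRisk ε p h ≤ entropicRisk ε p fun z => c + k z :=
        entropicRisk_mono hε.le hp (hk.const_add c) hhk
    _ = c + entropicRisk ε p k := entropicRisk_const_add hε.ne' hp hk c

end EntropicRisk

section LittleO

variable {α : Type*} {f V : α → ℝ}

lemma exists_le_const_add_mul_of_isLittleO (hV : 0 ≤ V) (hf : f =o[cofinite] V) {δ : ℝ}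
    (hδ : 0 < δ) : ∃ C, ∀ x, f x ≤ C + δ * V x := by
  have hfin : {x | ¬ ‖f x‖ ≤ δ * ‖V x‖}.Finite := eventually_cofinite.1 (hf.bound hδ)
  obtain ⟨M, hM⟩ := (hfin.image f).bddAbove
  refine ⟨max M 0, fun x => ?_⟩
  have hδV : 0 ≤ δ * V x := mul_nonneg hδ.le (hV x)
  by_cases hx : ‖f x‖ ≤ δ * ‖V x‖
  · rw [Real.norm_of_nonneg (hV x)] at hx
    linarith [Real.le_norm_self (f x), le_max_right M 0]
  · linarith [hM (Set.mem_image_of_mem f hx), le_max_left M 0]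

lemma isLittleO_of_forall_eventually_le {l : Filter α} {c : ℝ} (hV : Tendsto V l atTop)
    (hc : ∀ᶠ x in l, c ≤ f x) (hf : ∀ δ > 0, ∃ C, ∀ᶠ x in l, f x ≤ C + δ * V x) :
    f =o[l] V := by
  refine isLittleO_iff.2 fun δ hδ => ?_
  obtain ⟨C, hC⟩ := hf (δ / 2) (half_pos hδ)
  have hlarge (a : ℝ) : ∀ᶠ x in l, a ≤ δ / 2 * V x :=
    (hV.const_mul_atTop (half_pos hδ)).eventually_ge_atTop a
  filter_upwards [hc, hC, hlarge 0, hlarge (-c), hlarge C, hV.eventually_ge_atTop 0]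
    with x hcx hCx hx0 hxc hxC hVx
  rw [Real.norm_of_nonneg hVx, Real.norm_eq_abs, abs_le]
  constructor <;> linarith

lemma exists_mem_Ioo_mul_lt (K : ℝ) {a δ : ℝ} (ha : 0 < a) (hδ : 0 < δ) :
    ∃ r ∈ Set.Ioo 0 a, K * r < δ := by
  have hlim : Tendsto (fun r => K * r) (𝓝[>] 0) (𝓝 0) :=
    Tendsto.mono_left (Continuous.tendsto' (by fun_prop) 0 0 (mul_zero K)) nhdsWithin_le_nhds
  have hmem : ∀ᶠ r in 𝓝[>] 0, r ∈ Set.Ioo 0 a := Ioo_mem_nhdsGT ha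
  exact (hmem.and (hlim.eventually_lt_const hδ)).exists

end LittleO

namespace RSSetup

variable {U : Type*} [MetricSpace U] {S : RSSetup U}

lemma tendsto_V_atTop (S : RSSetup U) : Tendsto S.V cofinite atTop :=
  tendsto_atTop.2 fun K => eventually_cofinite.2 <|
    (S.V_infFinite K).subset fun _ hx => (not_le.1 hx).le

lemma memBV_iff_isLittleO {h : ℤ → ℝ} :
    S.memBV h ↔ BddBelow (Set.range h) ∧ h =o[cofinite] S.V := by
  have habs : (fun x => |h x| / S.V x) = abs ∘ fun x => h x / S.V x := by
    ext x
    simp only [Function.comp_apply, abs_div, abs_of_pos (S.V_pos x)]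
  rw [memBV, habs, ← tendsto_zero_iff_abs_tendsto_zero,
    isLittleO_iff_tendsto fun x hx => absurd hx (S.V_pos x).ne']

lemma memBV_of_forall_eventually_le {h : ℤ → ℝ} {c : ℝ} (hc : ∀ x, c ≤ h x)
    (hh : ∀ δ > 0, ∃ C, ∀ᶠ x in cofinite, h x ≤ C + δ * S.V x) : S.memBV h :=
  memBV_iff_isLittleO.2 ⟨⟨c, Set.forall_mem_range.2 hc⟩,
    isLittleO_of_forall_eventually_le S.tendsto_V_atTop (.of_forall hc) hh⟩

lemma memFam.exists_le_const_add_mul {h : ℝ → ℤ → ℝ} (hh : S.memFam h) {δ : ℝ} (hδ : 0 < δ) :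
    ∃ C, ∀ ε ∈ Set.Ioc 0 S.eps0, ∀ x, h ε x ≤ C + δ * S.V x := by
  obtain ⟨-, -, hbdd, hsup⟩ := hh
  obtain ⟨C, hC⟩ := exists_le_const_add_mul_of_isLittleO (fun x => (S.V_pos x).le)
    (memBV_iff_isLittleO.1 hsup).2 hδ
  exact ⟨C, fun ε hε x => (le_csSup (hbdd x) (Set.mem_image_of_mem _ hε)).trans (hC x)⟩

lemma memFam_of_forall_eventually_le {h : ℝ → ℤ → ℝ} {c : ℝ}
    (hc : ∀ ε ∈ Set.Ioc 0 S.eps0, ∀ x, c ≤ h ε x)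
    (hbdd : ∀ x, BddAbove ((fun ε => h ε x) '' Set.Ioc 0 S.eps0))
    (hh : ∀ δ > 0, ∃ C, ∀ᶠ x in cofinite, ∀ ε ∈ Set.Ioc 0 S.eps0, h ε x ≤ C + δ * S.V x) :
    S.memFam h := by
  have heps0 : S.eps0 ∈ Set.Ioc 0 S.eps0 := Set.right_mem_Ioc.2 S.eps0_pos
  refine ⟨fun ε hε => memBV_of_forall_eventually_le (hc ε hε) fun δ hδ => ?_, ⟨c, hc⟩, hbdd,
    memBV_of_forall_eventually_le (c := c) (fun x => ?_) fun δ hδ => ?_⟩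
  · obtain ⟨C, hC⟩ := hh δ hδ
    exact ⟨C, hC.mono fun x hx => hx ε hε⟩
  · exact (hc S.eps0 heps0 x).trans (le_csSup (hbdd x) (Set.mem_image_of_mem _ heps0))
  · obtain ⟨C, hC⟩ := hh δ hδ
    exact ⟨C, hC.mono fun x hx =>
      csSup_le (Set.Nonempty.image _ ⟨_, heps0⟩) (Set.forall_mem_image.2 hx)⟩

section Kernel

variable {ε : ℝ} {t : ℕ} {x : ℤ} {u : U} {h k : ℤ → ℝ} {c : ℝ}

lemma expSummable_q_of_le_const_add (hε : ε ∈ Set.Ioc 0 S.eps0) (ht : t ∈ Finset.Icc 1 S.T)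
    (hk : ExpSummable ε (S.q ε t x u) k) (hhk : ∀ z, h z ≤ c + k z) :
    ExpSummable ε (S.q ε t x u) h :=
  (hk.const_add c).mono hε.1.le (S.q_nonneg ε hε t ht x u) hhk

lemma le_lamE (hε : ε ∈ Set.Ioc 0 S.eps0) (ht : t ∈ Finset.Icc 1 S.T)
    (hh : ExpSummable ε (S.q ε t x u) h) (hc : ∀ z, c ≤ h z) : c ≤ S.lamE ε t x u h :=
  le_entropicRisk hε.1 (S.q_nonneg ε hε t ht x u) (S.q_pmf ε hε t ht x u) hh hc

lemma lamE_le_const_add (hε : ε ∈ Set.Ioc 0 S.eps0) (ht : t ∈ Finset.Icc 1 S.T)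
    (hk : ExpSummable ε (S.q ε t x u) k) (hhk : ∀ z, h z ≤ c + k z) :
    S.lamE ε t x u h ≤ c + S.lamE ε t x u k :=
  entropicRisk_le_const_add hε.1
    (pos_of_hasSum_one (S.q_nonneg ε hε t ht x u) (S.q_pmf ε hε t ht x u)) hk hhk

end Kernel

section Growth

variable {lam0 : ℝ} {t : ℕ} {u : U} {h : ℝ → ℤ → ℝ}

lemma memFam.expSummable (hh : S.memFam h) (hlam0 : 0 < lam0) (ht : t ∈ Finset.Icc 1 S.T)
    {ε : ℝ} (hε : ε ∈ Set.Ioc 0 S.eps0) {x : ℤ}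
    (hsum : ExpSummable ε (S.q ε t x u) fun z => lam0 * S.V z) :
    ExpSummable ε (S.q ε t x u) (h ε) := by
  obtain ⟨C, hC⟩ := hh.exists_le_const_add_mul hlam0
  exact expSummable_q_of_le_const_add hε ht hsum (hC ε hε)

lemma memFam.bddAbove_lamE (hh : S.memFam h) (hlam0 : 0 < lam0) (ht : t ∈ Finset.Icc 1 S.T)
    {x : ℤ}
    (hsum : ∀ ε ∈ Set.Ioc 0 S.eps0, ExpSummable ε (S.q ε t x u) fun z => lam0 * S.V z)
    (hbdd : ∃ C, ∀ ε ∈ Set.Ioc 0 S.eps0, S.lamE ε t x u (fun z => lam0 * S.V z) ≤ C) :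
    BddAbove ((fun ε => S.lamE ε t x u (h ε)) '' Set.Ioc 0 S.eps0) := by
  obtain ⟨C, hC⟩ := hh.exists_le_const_add_mul hlam0
  obtain ⟨M, hM⟩ := hbdd
  refine ⟨C + M, Set.forall_mem_image.2 fun ε hε => ?_⟩
  exact (lamE_le_const_add hε ht (hsum ε hε) (hC ε hε)).trans (by gcongr; exact hM ε hε)

lemma memFam.exists_eventually_lamE_le (hh : S.memFam h) (hlam0 : 0 < lam0)
    (ht : t ∈ Finset.Icc 1 S.T)
    (hsum : ∀ x, ∀ ε ∈ Set.Ioc 0 S.eps0, ExpSummable ε (S.q ε t x u) fun z => lam0 * S.V z)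
    (hgrowth : ∃ K, ∀ r ∈ Set.Ioo 0 lam0, ∀ᶠ x in cofinite, ∀ ε ∈ Set.Ioc 0 S.eps0,
      S.lamE ε t x u (fun z => r * S.V z) ≤ K * (r * S.V x))
    {δ : ℝ} (hδ : 0 < δ) :
    ∃ C, ∀ᶠ x in cofinite, ∀ ε ∈ Set.Ioc 0 S.eps0, S.lamE ε t x u (h ε) ≤ C + δ * S.V x := by
  obtain ⟨K, hK⟩ := hgrowth
  obtain ⟨r, hr, hKr⟩ := exists_mem_Ioo_mul_lt K hlam0 hδ
  obtain ⟨C, hC⟩ := hh.exists_le_const_add_mul hr.1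
  refine ⟨C, (hK r hr).mono fun x hx ε hε => ?_⟩
  have hsum_r : ExpSummable ε (S.q ε t x u) fun z => r * S.V z :=
    (hsum x ε hε).mono hε.1.le (S.q_nonneg ε hε t ht x u)
      fun z => mul_le_mul_of_nonneg_right hr.2.le (S.V_pos z).le
  calc S.lamE ε t x u (h ε)
      ≤ C + S.lamE ε t x u fun z => r * S.V z := lamE_le_const_add hε ht hsum_r (hC ε hε)
    _ ≤ C + K * (r * S.V x) := by gcongr; exact hx ε hε
    _ = C + K * r * S.V x := by rw [mul_assoc]
    _ ≤ C + δ * S.V x := by gcongr; exact (S.V_pos x).le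

lemma AssumptionA.exists_eventually_lamE_le (hA : S.AssumptionA lam0)
    (ht : t ∈ Finset.Icc 1 S.T) (u : U) :
    ∃ K, ∀ r ∈ Set.Ioo 0 lam0, ∀ᶠ x in cofinite, ∀ ε ∈ Set.Ioc 0 S.eps0,
      S.lamE ε t x u (fun z => r * S.V z) ≤ K * (r * S.V x) := by
  obtain ⟨-, -, -, hA3⟩ := hA
  obtain ⟨K, hK⟩ := hA3 t ht u
  refine ⟨K, fun r hr => ?_⟩
  obtain ⟨c, hcK, hc⟩ := hK r hr
  filter_upwards [hc] with x hx ε hε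
  exact (hx ε hε).trans
    (mul_le_mul_of_nonneg_right hcK.le (mul_pos hr.1 (S.V_pos x)).le)

end Growth

end RSSetup

theorem statement3_general {U : Type*} [MetricSpace U] (S : RSSetup U) {lam0 : ℝ}
    (hlam0 : 0 < lam0) {t : ℕ} (ht : t ∈ Finset.Icc 1 S.T) {u : U}
    (hA1 : ∀ x, (∀ ε ∈ Set.Ioc 0 S.eps0, Summable fun z =>
        Real.exp (lam0 * S.V z / ε) * S.q ε t x u z) ∧
      ∃ C, ∀ ε ∈ Set.Ioc 0 S.eps0, S.lamE ε t x u (fun z => lam0 * S.V z) ≤ C)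
    (hA3 : ∃ K, ∀ r ∈ Set.Ioo 0 lam0, ∀ᶠ x in cofinite, ∀ ε ∈ Set.Ioc 0 S.eps0,
      S.lamE ε t x u (fun z => r * S.V z) ≤ K * (r * S.V x))
    {h : ℝ → ℤ → ℝ} (hh : S.memFam h) :
    (∀ ε ∈ Set.Ioc 0 S.eps0, ∀ x, Summable fun z => Real.exp (h ε z / ε) * S.q ε t x u z) ∧
    S.memFam fun ε x => S.lamE ε t x u (h ε) := by
  obtain ⟨c, hc⟩ := hh.2.1
  have hsum : ∀ ε ∈ Set.Ioc 0 S.eps0, ∀ x, ExpSummable ε (S.q ε t x u) (h ε) :=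
    fun ε hε x => hh.expSummable hlam0 ht hε ((hA1 x).1 ε hε)
  exact ⟨hsum, RSSetup.memFam_of_forall_eventually_le
    (fun ε hε x => RSSetup.le_lamE hε ht (hsum ε hε x) (hc ε hε))
    (fun x => hh.bddAbove_lamE hlam0 ht (hA1 x).1 (hA1 x).2)
    (fun _ => hh.exists_eventually_lamE_le hlam0 ht (fun x => (hA1 x).1) hA3)⟩

/-- Under Assumption (A), for any family `{h^ε} ∈ 𝓑_V`, each `t ∈ {1,…,T}`
and each `u ∈ U`, the family `{Λ^ε_t(·,u;h^ε)}` belongs to `𝓑_V`; in particular each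
`Λ^ε_t(x,u;h^ε)` is finite (the defining sum converges). -/
theorem statement3 {U : Type*} [MetricSpace U] [CompleteSpace U]
    (S : RSSetup U) (lam0 : ℝ) (hA : S.AssumptionA lam0)
    (hfam : ℝ → ℤ → ℝ) (hmem : S.memFam hfam)
    (t : ℕ) (ht : t ∈ Finset.Icc 1 S.T) (u : U) :
    (∀ ε ∈ Set.Ioc (0 : ℝ) S.eps0, ∀ x : ℤ,
      Summable fun z : ℤ => Real.exp (hfam ε z / ε) * S.q ε t x u z) ∧
    S.memFam fun ε x => S.lamE ε t x u (hfam ε) := by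
  exact statement3_general S hA.1 ht (fun x => hA.2.1 t ht x u)
    (hA.exists_eventually_lamE_le ht u) hmem
end

section
/- Fix κ > 0 and ε₀ > 0 such that κ·∑_{z∈ℤ, z≠0} exp(−z²/ε₀) ≤ 1. For 0 < ε ≤ ε₀ and x, u ∈ ℤ, define the probability mass function q^ε(·;x,u) on ℤ by q^ε(z;x,u) = κ·exp(−ε^{−1}(z−x−u)²) for z ≠ x+u and q^ε(x+u;x,u) = 1 − κ·∑_{z≠0} exp(−ε^{−1}z²). Then for every function h : ℤ → ℝ with lim_{|z|→∞} h(z)/z² = 0 and every x, u ∈ ℤ: lim_{ε→0⁺} ε·log(∑_{z∈ℤ} exp(ε^{−1}h(z)) q^ε(z;x,u)) = sup_{z∈ℤ} [h(z) − (z−x−u)²]. In particular the one-step transition satisfies a large deviation limit with rate function I(z;x,u) = (z−x−u)². -/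
open Filter Topology

/-!
For small `ε` the kernel lies between `c * exp (-(z - m) ^ 2 / ε)` and `C * exp (-(z - m) ^ 2 / ε)`,
where `m = x + u` and `c`, `C` do not depend on `ε`, because the mass
`κ * ∑' w ≠ 0, exp (-w ^ 2 / ε)` taken away from its atom vanishes as `ε → 0⁺`.
Put `g z = h z - (z - m) ^ 2` and `S = ⨆ z, g z`. A single term bounds the exponential moment below
by `c * exp (g z / ε)`, while `(g z - S) / ε ≤ (g z - S) / δ` for `ε ≤ δ` bounds it above by
`exp (S / ε)` times a constant, finite as soon as `exp (g z / δ)` is summable. The constants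
disappear under `ε * log`.
-/

section LaplacePrinciple

variable {ι : Type*} {g : ι → ℝ} {c C δ ε S : ℝ}

theorem mul_log_mul_exp_div (hC : 0 < C) (hε : 0 < ε) (a : ℝ) :
    ε * Real.log (C * Real.exp (a / ε)) = ε * Real.log C + a := by
  rw [Real.log_mul hC.ne' (Real.exp_ne_zero _), Real.log_exp, mul_add, mul_div_cancel₀ _ hε.ne']

theorem tendsto_mul_log_mul_exp_div (hC : 0 < C) (a : ℝ) :
    Tendsto (fun ε : ℝ => ε * Real.log (C * Real.exp (a / ε))) (𝓝[>] 0) (𝓝 a) := by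
  have affine_limit : Tendsto (fun ε : ℝ => ε * Real.log C + a) (𝓝[>] 0) (𝓝 a) := by
    have hcont : Continuous fun ε : ℝ => ε * Real.log C + a := by fun_prop
    simpa using (hcont.tendsto 0).mono_left nhdsWithin_le_nhds
  refine affine_limit.congr' ?_
  filter_upwards [self_mem_nhdsWithin] with ε hε
  exact (mul_log_mul_exp_div hC hε a).symm

theorem tendsto_mul_log_of_exp_bounds {f : ℝ → ℝ} (hS : IsLUB (Set.range g) S)
    (hc : 0 < c) (hC : 0 < C)
    (lower : ∀ i, ∀ᶠ ε in 𝓝[>] 0, c * Real.exp (g i / ε) ≤ f ε)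
    (upper : ∀ᶠ ε in 𝓝[>] 0, f ε ≤ C * Real.exp (S / ε)) :
    Tendsto (fun ε => ε * Real.log (f ε)) (𝓝[>] 0) (𝓝 S) := by
  refine tendsto_order.2 ⟨fun a ha => ?_, fun a ha => ?_⟩
  · obtain ⟨_, ⟨i, rfl⟩, hai, -⟩ := hS.exists_between ha
    filter_upwards [(tendsto_mul_log_mul_exp_div hc (g i)).eventually_const_lt hai, lower i,
      self_mem_nhdsWithin] with ε hlt hle (hε : 0 < ε)
    exact hlt.trans_le (by gcongr)
  · obtain ⟨_, i, -⟩ := hS.nonempty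
    filter_upwards [(tendsto_mul_log_mul_exp_div hC S).eventually_lt_const ha, lower i, upper,
      self_mem_nhdsWithin] with ε hlt hlow hupp (hε : 0 < ε)
    have hf : 0 < f ε := (by positivity : 0 < c * Real.exp (g i / ε)).trans_le hlow
    exact lt_of_le_of_lt (by gcongr) hlt

theorem bddAbove_range_of_summable_exp_div (hδ : 0 < δ)
    (hg : Summable fun i => Real.exp (g i / δ)) : BddAbove (Set.range g) := by
  refine ⟨δ * Real.log (∑' i, Real.exp (g i / δ)), Set.forall_mem_range.2 fun i => ?_⟩
  have term_le : Real.exp (g i / δ) ≤ ∑' j, Real.exp (g j / δ) :=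
    hg.le_tsum i fun j _ => (Real.exp_pos _).le
  rw [← div_le_iff₀' hδ]
  exact (Real.le_log_iff_exp_le ((Real.exp_pos _).trans_le term_le)).2 term_le

theorem exp_div_le_mul_exp_div {a : ℝ} (ha : a ≤ S) (hε : 0 < ε) (hεδ : ε ≤ δ) :
    Real.exp (a / ε) ≤ Real.exp (S / ε) * Real.exp (-S / δ) * Real.exp (a / δ) := by
  have gap_le : (S - a) / δ ≤ (S - a) / ε :=
    div_le_div_of_nonneg_left (sub_nonneg.2 ha) hε hεδ
  rw [sub_div, sub_div] at gap_le
  rw [← Real.exp_add, ← Real.exp_add, Real.exp_le_exp, neg_div]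
  linarith

theorem summable_exp_div_of_le (hε : 0 < ε) (hεδ : ε ≤ δ)
    (hg : Summable fun i => Real.exp (g i / δ)) : Summable fun i => Real.exp (g i / ε) := by
  obtain ⟨S, hS⟩ := bddAbove_range_of_summable_exp_div (hε.trans_le hεδ) hg
  exact (hg.mul_left _).of_nonneg_of_le (fun _ => (Real.exp_pos _).le)
    fun i => exp_div_le_mul_exp_div (hS ⟨i, rfl⟩) hε hεδ

theorem tsum_exp_div_le (hS : S ∈ upperBounds (Set.range g)) (hε : 0 < ε) (hεδ : ε ≤ δ)
    (hg : Summable fun i => Real.exp (g i / δ)) :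
    ∑' i, Real.exp (g i / ε) ≤
      Real.exp (S / ε) * Real.exp (-S / δ) * ∑' i, Real.exp (g i / δ) := by
  rw [← tsum_mul_left]
  exact (summable_exp_div_of_le hε hεδ hg).tsum_le_tsum
    (fun i => exp_div_le_mul_exp_div (hS ⟨i, rfl⟩) hε hεδ) (hg.mul_left _)

theorem tendsto_mul_log_tsum_of_exp_bounds [Nonempty ι] {p : ℝ → ι → ℝ} (hδ : 0 < δ)
    (hg : Summable fun i => Real.exp (g i / δ)) (hc : 0 < c) (hC : 0 < C)
    (lower : ∀ᶠ ε in 𝓝[>] 0, ∀ i, c * Real.exp (g i / ε) ≤ p ε i)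
    (upper : ∀ᶠ ε in 𝓝[>] 0, ∀ i, p ε i ≤ C * Real.exp (g i / ε)) :
    Tendsto (fun ε => ε * Real.log (∑' i, p ε i)) (𝓝[>] 0) (𝓝 (⨆ i, g i)) := by
  have hlub : IsLUB (Set.range g) (⨆ i, g i) :=
    isLUB_ciSup (bddAbove_range_of_summable_exp_div hδ hg)
  set S := ⨆ i, g i
  have p_nonneg : ∀ᶠ ε in 𝓝[>] 0, ∀ i, 0 ≤ p ε i := by
    filter_upwards [lower] with ε hlow i
    exact (by positivity : 0 ≤ c * Real.exp (g i / ε)).trans (hlow i)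
  have summable_p : ∀ᶠ ε in 𝓝[>] 0, Summable (p ε) := by
    filter_upwards [p_nonneg, upper, Ioc_mem_nhdsGT hδ] with ε hnonneg hupp ⟨hε, hεδ⟩
    exact ((summable_exp_div_of_le hε hεδ hg).mul_left C).of_nonneg_of_le hnonneg hupp
  have tsum_exp_pos : 0 < ∑' i, Real.exp (g i / δ) :=
    hg.tsum_pos (fun _ => (Real.exp_pos _).le) (Classical.arbitrary ι) (Real.exp_pos _)
  refine tendsto_mul_log_of_exp_bounds
    (C := C * (Real.exp (-S / δ) * ∑' i, Real.exp (g i / δ))) hlub hc (by positivity)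
    (fun i => ?_) ?_
  · filter_upwards [lower, p_nonneg, summable_p] with ε hlow hnonneg hsum
    exact (hlow i).trans (hsum.le_tsum i fun j _ => hnonneg j)
  · filter_upwards [upper, summable_p, Ioc_mem_nhdsGT hδ] with ε hupp hsum ⟨hε, hεδ⟩
    calc ∑' i, p ε i
      _ ≤ C * ∑' i, Real.exp (g i / ε) := by
        rw [← tsum_mul_left]
        exact hsum.tsum_le_tsum hupp ((summable_exp_div_of_le hε hεδ hg).mul_left C)
      _ ≤ C * (Real.exp (S / ε) * Real.exp (-S / δ) * ∑' i, Real.exp (g i / δ)) := by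
        gcongr
        exact tsum_exp_div_le hlub.1 hε hεδ hg
      _ = C * (Real.exp (-S / δ) * ∑' i, Real.exp (g i / δ)) * Real.exp (S / ε) := by ring

end LaplacePrinciple

theorem summable_exp_neg_mul_sq_add_mul {a : ℝ} (ha : 0 < a) (b : ℝ) :
    Summable fun z : ℤ => Real.exp (-a * (z : ℝ) ^ 2 + b * z) := by
  -- The summands are the norms of the terms `exp (2πinz + πin²τ)` of the theta series at purely
  -- imaginary `z` and `τ`.
  have theta : Summable (jacobiTheta₂_term ·
      ((-b / (2 * Real.pi) : ℝ) * Complex.I) ((a / Real.pi : ℝ) * Complex.I)) :=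
    (summable_jacobiTheta₂_term_iff _ _).2 (by rw [Complex.im_ofReal_mul, Complex.I_im]; positivity)
  refine theta.norm.congr fun z => ?_
  rw [norm_jacobiTheta₂_term, Complex.im_ofReal_mul, Complex.im_ofReal_mul, Complex.I_im]
  congr 1
  field_simp
  ring

theorem tendsto_tsum_ne_zero_exp_neg_sq_div :
    Tendsto (fun ε : ℝ => ∑' w : {w : ℤ // w ≠ 0}, Real.exp (-((w : ℤ) : ℝ) ^ 2 / ε))
      (𝓝[>] 0) (𝓝 0) := by
  have summable_bound : Summable fun w : {w : ℤ // w ≠ 0} => Real.exp (-((w : ℤ) : ℝ) ^ 2) := by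
    have hsum := summable_exp_neg_mul_sq_add_mul one_pos 0
    simp only [neg_mul, one_mul, zero_mul, add_zero] at hsum
    exact hsum.subtype _
  have term_limit (w : {w : ℤ // w ≠ 0}) :
      Tendsto (fun ε : ℝ => Real.exp (-((w : ℤ) : ℝ) ^ 2 / ε)) (𝓝[>] 0) (𝓝 0) := by
    have hw : -((w : ℤ) : ℝ) ^ 2 < 0 := neg_neg_of_pos (sq_pos_of_ne_zero (Int.cast_ne_zero.2 w.2))
    exact Real.tendsto_exp_atBot.comp (tendsto_inv_nhdsGT_zero.const_mul_atTop_of_neg hw)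
  have term_le : ∀ᶠ ε : ℝ in 𝓝[>] 0, ∀ w : {w : ℤ // w ≠ 0},
      ‖Real.exp (-((w : ℤ) : ℝ) ^ 2 / ε)‖ ≤ Real.exp (-((w : ℤ) : ℝ) ^ 2) := by
    filter_upwards [Ioc_mem_nhdsGT one_pos] with ε ⟨hε, hε_le_one⟩ w
    rw [Real.norm_eq_abs, Real.abs_exp, Real.exp_le_exp, neg_div, neg_le_neg_iff]
    exact le_div_self (sq_nonneg _) hε hε_le_one
  simpa using tendsto_tsum_of_dominated_convergence summable_bound term_limit term_le

theorem summable_exp_sub_sq_of_eventually_le {h : ℤ → ℝ} {c : ℝ} (hc : c < 1)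
    (hh : ∀ᶠ z : ℤ in cofinite, h z ≤ c * (z : ℝ) ^ 2) (m : ℝ) :
    Summable fun z : ℤ => Real.exp (h z - (z - m) ^ 2) := by
  refine Summable.of_norm_bounded_eventually
    (summable_exp_neg_mul_sq_add_mul (sub_pos.2 hc) (2 * m)) ?_
  filter_upwards [hh] with z hz
  rw [Real.norm_eq_abs, Real.abs_exp, Real.exp_le_exp]
  linarith [sq_nonneg m]

/-- The transition kernel `q^ε(z; x, u)` of the walk, which depends on `x` and `u` only through
`m = x + u`: Gaussian weights off `m`, with the remaining mass put at `m`. The value at `m` is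
negative when `ε` is too large for the Gaussian weights to have total mass at most one. -/
noncomputable def gaussianWalkKernel (κ ε : ℝ) (m z : ℤ) : ℝ :=
  if z = m then 1 - κ * ∑' w : {w : ℤ // w ≠ 0}, Real.exp (-((w : ℤ) : ℝ) ^ 2 / ε)
  else κ * Real.exp (-((z : ℝ) - m) ^ 2 / ε)

theorem eventually_min_mul_exp_le_gaussianWalkKernel (κ : ℝ) (m : ℤ) :
    ∀ᶠ ε in 𝓝[>] 0, ∀ z : ℤ,
      min κ (1 / 2) * Real.exp (-((z : ℝ) - m) ^ 2 / ε) ≤ gaussianWalkKernel κ ε m z := by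
  have mass_limit := tendsto_tsum_ne_zero_exp_neg_sq_div.const_mul κ
  rw [mul_zero] at mass_limit
  filter_upwards [mass_limit.eventually_lt_const one_half_pos] with ε hmass z
  unfold gaussianWalkKernel
  split_ifs with hz
  · subst hz
    rw [sub_self, zero_pow two_ne_zero, neg_zero, zero_div, Real.exp_zero, mul_one]
    linarith [min_le_right κ (1 / 2)]
  · gcongr
    exact min_le_left _ _

theorem gaussianWalkKernel_le_max_mul_exp {κ : ℝ} (hκ : 0 ≤ κ) (ε : ℝ) (m z : ℤ) :
    gaussianWalkKernel κ ε m z ≤ max κ 1 * Real.exp (-((z : ℝ) - m) ^ 2 / ε) := by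
  unfold gaussianWalkKernel
  split_ifs with hz
  · subst hz
    have mass_nonneg : 0 ≤ κ * ∑' w : {w : ℤ // w ≠ 0}, Real.exp (-((w : ℤ) : ℝ) ^ 2 / ε) :=
      mul_nonneg hκ (tsum_nonneg fun _ => (Real.exp_pos _).le)
    rw [sub_self, zero_pow two_ne_zero, neg_zero, zero_div, Real.exp_zero, mul_one]
    linarith [le_max_right κ 1]
  · gcongr
    exact le_max_left _ _

theorem eventually_le_mul_sq_of_tendsto_div_sq {h : ℤ → ℝ} {a c : ℝ} (hac : a < c)
    (hh : Tendsto (fun z : ℤ => h z / (z : ℝ) ^ 2) cofinite (𝓝 a)) :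
    ∀ᶠ z : ℤ in cofinite, h z ≤ c * (z : ℝ) ^ 2 := by
  filter_upwards [hh.eventually_lt_const hac, eventually_cofinite_ne 0] with z hlt hz
  exact ((div_lt_iff₀ (by positivity)).1 hlt).le

theorem statement18_general {κ : ℝ} (hκ : 0 < κ) {h : ℤ → ℝ} {c : ℝ} (hc : c < 1)
    (hh : ∀ᶠ z : ℤ in cofinite, h z ≤ c * (z : ℝ) ^ 2) (m : ℤ) :
    Tendsto (fun ε => ε * Real.log (∑' z, Real.exp (h z / ε) * gaussianWalkKernel κ ε m z))
      (𝓝[>] 0) (𝓝 (⨆ z : ℤ, (h z - ((z : ℝ) - m) ^ 2))) := by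
  have exp_tilt (ε b : ℝ) (z : ℤ) : b * Real.exp ((h z - ((z : ℝ) - m) ^ 2) / ε) =
      Real.exp (h z / ε) * (b * Real.exp (-((z : ℝ) - m) ^ 2 / ε)) := by
    rw [sub_eq_add_neg, add_div, Real.exp_add, mul_left_comm]
  refine tendsto_mul_log_tsum_of_exp_bounds (c := min κ (1 / 2)) (C := max κ 1) one_pos
    (by simpa only [div_one] using summable_exp_sub_sq_of_eventually_le hc hh m)
    (by positivity) (by positivity) ?_ (.of_forall fun ε z => ?_)
  · filter_upwards [eventually_min_mul_exp_le_gaussianWalkKernel κ m] with ε hlow z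
    rw [exp_tilt]
    gcongr
    exact hlow z
  · rw [exp_tilt]
    gcongr
    exact gaussianWalkKernel_le_max_mul_exp hκ.le ε m z

/-- For the random-walk transition kernel
`q^ε(z;x,u) = κ exp(-(z-x-u)²/ε)` for `z ≠ x+u` and
`q^ε(x+u;x,u) = 1 - κ ∑_{w≠0} exp(-w²/ε)`, and any `h : ℤ → ℝ` with `h(z)/z² → 0` as
`|z| → ∞`, the `ε`-scaled log-exponential moments converge as `ε → 0⁺` to
`sup_z [h(z) - (z-x-u)²]`; i.e. the one-step transition satisfies a large deviation limit
with rate function `I(z;x,u) = (z-x-u)²`. -/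
theorem statement18 (κ ε₀ : ℝ) (hκ : 0 < κ) (hε₀ : 0 < ε₀)
    (hsum : κ * ∑' w : {w : ℤ // w ≠ 0}, Real.exp (-((w : ℤ) : ℝ) ^ 2 / ε₀) ≤ 1)
    (q : ℝ → ℤ → ℤ → ℤ → ℝ)
    (hq : ∀ (ε : ℝ) (x u z : ℤ),
      q ε x u z =
        if z = x + u then 1 - κ * ∑' w : {w : ℤ // w ≠ 0}, Real.exp (-((w : ℤ) : ℝ) ^ 2 / ε)
        else κ * Real.exp (-(((z - x - u : ℤ) : ℝ)) ^ 2 / ε))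
    (h : ℤ → ℝ)
    (hh : Tendsto (fun z : ℤ => h z / ((z : ℝ)) ^ 2) Filter.cofinite (nhds 0))
    (x u : ℤ) :
    Tendsto (fun ε : ℝ => ε * Real.log (∑' z : ℤ, Real.exp (h z / ε) * q ε x u z))
      (nhdsWithin 0 (Set.Ioi 0))
      (nhds (⨆ z : ℤ, (h z - (((z - x - u : ℤ) : ℝ)) ^ 2))) := by
  have hh' := eventually_le_mul_sq_of_tendsto_div_sq one_half_pos hh
  simpa [hq, gaussianWalkKernel, sub_sub] using statement18_general hκ one_half_lt_one hh' (x + u)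
end
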